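/- Let p(n) denote the n-th prime number. Then the limit as n → ∞ of p(n) / (n · (log n + log log n − 1)) equals 1; that is, p(n) ~ n(log n + log log n − 1). -/

import Mathlib

open Filter Topology

/-- `p n` is the `n`-th prime number, so `p 1 = 2`, `p 2 = 3`, … -/
noncomputable def p (n : ℕ) : ℕ := Nat.nth Nat.Prime (n - 1)


/-- Fejér kernel (unnormalised). -/
noncomputable def fejK (v : ℝ) : ℝ := (Real.sinc (v / 2)) ^ 2

lemma fejK_nonneg (v : ℝ) : 0 ≤ fejK v := sq_nonneg _

lemma fejK_cont : Continuous fejK := by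
  unfold fejK
  exact (Real.continuous_sinc.comp (continuous_id.div_const 2)).pow 2

lemma fejK_zero : fejK 0 = 1 := by simp [fejK]

lemma fejK_of_ne {v : ℝ} (hv : v ≠ 0) : fejK v = 2 * (1 - Real.cos v) / v ^ 2 := by
  unfold fejK
  rw [Real.sinc_of_ne_zero (by simpa using hv)]
  have : Real.cos v = 1 - 2 * Real.sin (v / 2) ^ 2 := by
    have h := Real.cos_two_mul (v / 2)
    have h2 := Real.sin_sq_add_cos_sq (v / 2)
    rw [show 2 * (v / 2) = v by ring] at h
    linarith
  rw [this]
  field_simp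
  ring

lemma fejK_le_one (v : ℝ) : fejK v ≤ 1 := by
  unfold fejK
  have h := Real.abs_sinc_le_one (v / 2)
  rw [← sq_abs]
  exact pow_le_one₀ (abs_nonneg _) h

lemma fejK_le (v : ℝ) : fejK v ≤ 8 * (1 + v ^ 2)⁻¹ := by
  have h1 := fejK_le_one v
  have hp : 0 < 1 + v ^ 2 := by positivity
  rw [← div_eq_mul_inv, le_div_iff₀ hp]
  have h2 : fejK v * v ^ 2 ≤ 4 := by
    rcases eq_or_ne v 0 with rfl | hv
    · simp
    · rw [fejK_of_ne hv, div_mul_cancel₀ _ (by positivity)]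
      linarith [Real.neg_one_le_cos v]
  linarith

lemma fejK_integrable : MeasureTheory.Integrable fejK := by
  refine (integrable_inv_one_add_sq.const_mul 8).mono' fejK_cont.aestronglyMeasurable ?_
  filter_upwards with v
  rw [Real.norm_of_nonneg (fejK_nonneg v)]
  exact fejK_le v

lemma fejK_integral_pos : 0 < ∫ v, fejK v := by
  refine MeasureTheory.integral_pos_of_integrable_nonneg_nonzero fejK_cont fejK_integrable
    fejK_nonneg (x := 0) (by simp [fejK_zero])

lemma fejK_half (v : ℝ) (hv : v ≠ 0) : ∫ t in (0:ℝ)..1, ((1 - t : ℝ) : ℂ) * Complex.exp (t * v * Complex.I)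
    = (1 + v * Complex.I - Complex.exp (v * Complex.I)) / v ^ 2 := by
  have hv' : (v : ℂ) ≠ 0 := by exact_mod_cast hv
  have hd : ∀ t ∈ Set.uIcc (0:ℝ) 1, HasDerivAt (fun t : ℝ => (1 - (t:ℂ)) * Complex.exp (t * v * Complex.I) / (v * Complex.I)
      - Complex.exp (t * v * Complex.I) / v ^ 2) (((1 - t : ℝ) : ℂ) * Complex.exp (t * v * Complex.I)) t := by
    intro t _
    have h0 : HasDerivAt (fun t : ℝ => (t : ℂ)) 1 t := Complex.ofRealCLM.hasDerivAt
    have he : HasDerivAt (fun t : ℝ => Complex.exp (t * v * Complex.I))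
        (Complex.exp (t * v * Complex.I) * (1 * v * Complex.I)) t :=
      ((h0.mul_const (v:ℂ)).mul_const Complex.I).cexp
    convert! ((((hasDerivAt_const t (1:ℂ)).sub h0).mul he).div_const (v * Complex.I)).sub
      (he.div_const ((v:ℂ) ^ 2)) using 1
    push_cast
    field_simp
    simp only [Pi.sub_apply]
    ring_nf
    simp only [Complex.I_sq]
    ring
  rw [intervalIntegral.integral_eq_sub_of_hasDerivAt hd]
  · simp
    field_simp
    ring
  · apply Continuous.intervalIntegrable
    fun_prop

lemma fejK_eq (v : ℝ) : ∫ t in (-1:ℝ)..1, ((1 - |t| : ℝ) : ℂ) * Complex.exp (t * v * Complex.I) = fejK v := by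
  rcases eq_or_ne v 0 with rfl | hv
  · simp only [Complex.ofReal_zero, mul_zero, zero_mul, Complex.exp_zero, mul_one, fejK_zero]
    rw [intervalIntegral.integral_ofReal]
    rw [← intervalIntegral.integral_add_adjacent_intervals (b := 0)
      (by apply Continuous.intervalIntegrable; fun_prop) (by apply Continuous.intervalIntegrable; fun_prop)]
    have h1 : ∫ t in (-1:ℝ)..0, (1 - |t|) = ∫ t in (-1:ℝ)..0, (1 + t) := by
      apply intervalIntegral.integral_congr
      intro t ht
      simp only [Set.uIcc_of_le (show (-1:ℝ) ≤ 0 by norm_num), Set.mem_Icc] at ht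
      simp [abs_of_nonpos ht.2]
    have h2 : ∫ t in (0:ℝ)..1, (1 - |t|) = ∫ t in (0:ℝ)..1, (1 - t) := by
      apply intervalIntegral.integral_congr
      intro t ht
      simp only [Set.uIcc_of_le (show (0:ℝ) ≤ 1 by norm_num), Set.mem_Icc] at ht
      simp [abs_of_nonneg ht.1]
    rw [h1, h2, intervalIntegral.integral_add (by simp) (by simp), intervalIntegral.integral_sub (by simp) (by simp)]
    norm_num
  · rw [← intervalIntegral.integral_add_adjacent_intervals (b := 0)
      (by apply Continuous.intervalIntegrable; fun_prop) (by apply Continuous.intervalIntegrable; fun_prop)]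
    have h1 : ∫ t in (-1:ℝ)..0, ((1 - |t| : ℝ) : ℂ) * Complex.exp (t * v * Complex.I)
        = ∫ t in (0:ℝ)..1, ((1 - t : ℝ) : ℂ) * Complex.exp (t * (-v : ℝ) * Complex.I) := by
      have := intervalIntegral.integral_comp_neg (a := 0) (b := 1) (fun t : ℝ => ((1 - |t| : ℝ) : ℂ) * Complex.exp (t * v * Complex.I))
      rw [neg_zero] at this
      rw [← this]
      apply intervalIntegral.integral_congr
      intro t ht
      simp only [Set.uIcc_of_le (show (0:ℝ) ≤ 1 by norm_num), Set.mem_Icc] at ht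
      simp [abs_of_nonneg ht.1]
    have h2 : ∫ t in (0:ℝ)..1, ((1 - |t| : ℝ) : ℂ) * Complex.exp (t * v * Complex.I)
        = ∫ t in (0:ℝ)..1, ((1 - t : ℝ) : ℂ) * Complex.exp (t * v * Complex.I) := by
      apply intervalIntegral.integral_congr
      intro t ht
      simp only [Set.uIcc_of_le (show (0:ℝ) ≤ 1 by norm_num), Set.mem_Icc] at ht
      simp [abs_of_nonneg ht.1]
    rw [h1, h2, fejK_half v hv, fejK_half (-v) (neg_ne_zero.mpr hv), fejK_of_ne hv]
    have hv' : (v : ℂ) ≠ 0 := by exact_mod_cast hv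
    push_cast
    rw [Complex.cos]
    field_simp
    ring

section tauber
open MeasureTheory

lemma conv_fubini (f : ℝ → ℝ) (hf : Measurable f) (C : ℝ) (hC : ∀ u, |f u| ≤ C) (G : ℂ → ℂ)
    (hG : ∀ s : ℂ, 0 < s.re → ∫ u in Set.Ioi (0:ℝ), (f u : ℂ) * Complex.exp (-s * u) = G s)
    (y σ : ℝ) (hσ : 0 < σ) :
    ∫ u in Set.Ioi (0:ℝ), ((f u * Real.exp (-σ * u) * fejK (y - u) : ℝ) : ℂ) =
      ∫ t in (-1:ℝ)..1, ((1 - |t| : ℝ) : ℂ) * Complex.exp (t * y * Complex.I) * G (σ + t * Complex.I) := by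
  have hC0 : 0 ≤ C := (abs_nonneg _).trans (hC 0)
  have key : ∀ u t : ℝ, (f u : ℂ) * Real.exp (-σ * u) * (((1 - |t| : ℝ) : ℂ) * Complex.exp (t * (y - u : ℝ) * Complex.I))
      = ((1 - |t| : ℝ) : ℂ) * Complex.exp (t * y * Complex.I) * ((f u : ℂ) * Complex.exp (-(σ + t * Complex.I) * u)) := by
    intro u t
    have : Complex.exp (t * y * Complex.I) * Complex.exp (-(σ + t * Complex.I) * u)
      = Real.exp (-σ * u) * Complex.exp (t * (y - u : ℝ) * Complex.I) := by
      rw [Complex.ofReal_exp, ← Complex.exp_add, ← Complex.exp_add]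
      congr 1
      push_cast
      ring
    linear_combination (-(f u : ℂ) * ((1 - |t| : ℝ) : ℂ)) * this
  calc _ = ∫ u in Set.Ioi (0:ℝ), ∫ t in (-1:ℝ)..1, (f u : ℂ) * Real.exp (-σ * u) * (((1 - |t| : ℝ) : ℂ) * Complex.exp (t * (y - u : ℝ) * Complex.I)) := by
        congr 1
        ext u
        rw [intervalIntegral.integral_const_mul, fejK_eq]
        push_cast
        ring
    _ = ∫ t in (-1:ℝ)..1, ∫ u in Set.Ioi (0:ℝ), (f u : ℂ) * Real.exp (-σ * u) * (((1 - |t| : ℝ) : ℂ) * Complex.exp (t * (y - u : ℝ) * Complex.I)) := by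
        simp only [intervalIntegral.integral_of_le (show (-1:ℝ) ≤ 1 by norm_num)]
        apply integral_integral_swap
        have hint : Integrable (fun z : ℝ × ℝ => (C * Real.exp (-σ * z.1)) * (1:ℝ))
            ((volume.restrict (Set.Ioi (0:ℝ))).prod (volume.restrict (Set.Ioc (-1:ℝ) 1))) := by
          apply Integrable.mul_prod (f := fun u => C * Real.exp (-σ * u)) (g := fun _ => (1:ℝ))
          · exact (integrableOn_exp_mul_Ioi (by linarith) 0).const_mul C
          · exact integrable_const _
        refine hint.mono' ?_ ?_
        · apply Measurable.aestronglyMeasurable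
          unfold Function.uncurry
          simp only
          fun_prop
        · rw [Measure.prod_restrict]
          filter_upwards [ae_restrict_mem (measurableSet_Ioi.prod measurableSet_Ioc)] with z hz
          simp only [Function.uncurry]
          obtain ⟨h1, h2⟩ := hz
          simp only [Set.mem_Ioc] at h2
          rw [norm_mul, norm_mul, norm_mul]
          have e1 : ‖Complex.exp (z.2 * (y - z.1 : ℝ) * Complex.I)‖ = 1 := by
            rw [← Complex.ofReal_mul, Complex.norm_exp_ofReal_mul_I]
          rw [e1, Complex.norm_real, Complex.norm_real, Complex.norm_real]
          rw [Real.norm_of_nonneg (Real.exp_pos _).le, mul_one]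
          have e2 : ‖1 - |z.2|‖ ≤ 1 := by
            have := abs_le.mpr ⟨h2.1.le, h2.2⟩
            rw [Real.norm_of_nonneg (by linarith)]
            linarith [abs_nonneg z.2]
          have e3 : ‖f z.1‖ ≤ C := hC _
          gcongr
    _ = _ := by
        apply intervalIntegral.integral_congr
        intro t _
        simp only
        rw [← hG _ (by simpa using hσ), ← integral_const_mul]
        congr 1
        ext u
        exact key u t

lemma conv_limit (f : ℝ → ℝ) (hf : Measurable f) (C : ℝ) (hC : ∀ u, |f u| ≤ C) (G : ℂ → ℂ)
    (hGc : ContinuousOn G {s | 0 ≤ s.re})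
    (hG : ∀ s : ℂ, 0 < s.re → ∫ u in Set.Ioi (0:ℝ), (f u : ℂ) * Complex.exp (-s * u) = G s)
    (y : ℝ) :
    ((∫ u in Set.Ioi (0:ℝ), f u * fejK (y - u) : ℝ) : ℂ) =
      ∫ t in (-1:ℝ)..1, ((1 - |t| : ℝ) : ℂ) * Complex.exp (t * y * Complex.I) * G (t * Complex.I) := by
  have hC0 : 0 ≤ C := (abs_nonneg _).trans (hC 0)
  have hKi : Integrable (fun u => fejK (y - u)) := fejK_integrable.comp_sub_left y
  have hKm : Measurable (fun u => fejK (y - u)) := fejK_cont.measurable.comp (by fun_prop)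
  have L1 : Tendsto (fun σ : ℝ => ∫ u in Set.Ioi (0:ℝ), ((f u * Real.exp (-σ * u) * fejK (y - u) : ℝ) : ℂ))
      (𝓝[>] 0) (𝓝 (∫ u in Set.Ioi (0:ℝ), ((f u * fejK (y - u) : ℝ) : ℂ))) := by
    apply tendsto_integral_filter_of_dominated_convergence (fun u => C * fejK (y - u))
    · filter_upwards with σ
      apply Measurable.aestronglyMeasurable
      fun_prop
    · filter_upwards [self_mem_nhdsWithin] with σ hσ
      filter_upwards [ae_restrict_mem measurableSet_Ioi] with u hu
      simp only [Set.mem_Ioi] at hσ hu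
      rw [Complex.norm_real, norm_mul, norm_mul, Real.norm_of_nonneg (fejK_nonneg _),
        Real.norm_of_nonneg (Real.exp_pos _).le]
      have h1 : Real.exp (-σ * u) ≤ 1 := Real.exp_le_one_iff.mpr (by nlinarith)
      have h2 : ‖f u‖ ≤ C := hC u
      have h3 := fejK_nonneg (y - u)
      calc ‖f u‖ * Real.exp (-σ * u) * fejK (y - u) ≤ C * 1 * fejK (y - u) := by gcongr
        _ = _ := by ring
    · exact (hKi.const_mul C).integrableOn
    · filter_upwards with u
      have : Continuous (fun σ : ℝ => ((f u * Real.exp (-σ * u) * fejK (y - u) : ℝ) : ℂ)) := by fun_prop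
      have h := this.tendsto 0
      simp only [neg_zero, zero_mul, Real.exp_zero, mul_one] at h
      exact h.mono_left nhdsWithin_le_nhds
  obtain ⟨M, hM⟩ : ∃ M, ∀ σ ∈ Set.Icc (0:ℝ) 1, ∀ t ∈ Set.Icc (-1:ℝ) 1, ‖G (σ + t * Complex.I)‖ ≤ M := by
    have hcomp : IsCompact ((fun z : ℝ × ℝ => (z.1 + z.2 * Complex.I : ℂ)) '' (Set.Icc (0:ℝ) 1 ×ˢ Set.Icc (-1:ℝ) 1)) :=
      (isCompact_Icc.prod isCompact_Icc).image (by fun_prop)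
    obtain ⟨M, hM⟩ := hcomp.exists_bound_of_continuousOn (hGc.mono (by
      rintro _ ⟨z, hz, rfl⟩
      simpa using hz.1.1))
    exact ⟨M, fun σ hσ t ht => hM _ ⟨(σ, t), ⟨hσ, ht⟩, rfl⟩⟩
  have hM0 : 0 ≤ M := (norm_nonneg _).trans (hM 0 (by simp) 0 (by simp))
  have L2 : Tendsto (fun σ : ℝ => ∫ t in (-1:ℝ)..1, ((1 - |t| : ℝ) : ℂ) * Complex.exp (t * y * Complex.I) * G (σ + t * Complex.I))
      (𝓝[>] 0) (𝓝 (∫ t in (-1:ℝ)..1, ((1 - |t| : ℝ) : ℂ) * Complex.exp (t * y * Complex.I) * G (t * Complex.I))) := by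
    apply intervalIntegral.tendsto_integral_filter_of_dominated_convergence (fun _ => M)
    · filter_upwards [self_mem_nhdsWithin] with σ hσ
      simp only [Set.mem_Ioi] at hσ
      have : Continuous (fun t : ℝ => G (σ + t * Complex.I)) :=
        hGc.comp_continuous (by fun_prop) (by intro t; simpa using hσ.le)
      apply Continuous.aestronglyMeasurable
      exact Continuous.mul (by fun_prop) this
    · have : Set.Ioc (0:ℝ) 1 ∈ 𝓝[>] (0:ℝ) := Ioc_mem_nhdsGT one_pos
      filter_upwards [this] with σ hσ
      filter_upwards with t ht
      rw [Set.uIoc_of_le (by norm_num)] at ht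
      have h1 := hM σ ⟨hσ.1.le, hσ.2⟩ t ⟨ht.1.le, ht.2⟩
      rw [norm_mul, norm_mul, ← Complex.ofReal_mul, Complex.norm_exp_ofReal_mul_I, Complex.norm_real]
      have e2 : ‖1 - |t|‖ ≤ 1 := by
        have := abs_le.mpr ⟨ht.1.le, ht.2⟩
        rw [Real.norm_of_nonneg (by linarith)]
        linarith [abs_nonneg t]
      calc _ ≤ 1 * 1 * M := by gcongr
        _ = M := by ring
    · simp
    · filter_upwards with t ht
      apply Tendsto.const_mul
      have : ContinuousOn (fun σ : ℝ => G (σ + t * Complex.I)) (Set.Ici 0) :=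
        hGc.comp (by fun_prop) (by intro σ hσ; simpa using hσ)
      have h := (this 0 (by simp)).tendsto
      simp only [Complex.ofReal_zero, zero_add] at h
      exact h.mono_left (nhdsWithin_mono _ Set.Ioi_subset_Ici_self)
  rw [← integral_complex_ofReal]
  refine tendsto_nhds_unique L1 (L2.congr' ?_)
  filter_upwards [self_mem_nhdsWithin] with σ hσ
  exact (conv_fubini f hf C hC G hG y σ hσ).symm

lemma conv_tendsto (f : ℝ → ℝ) (hf : Measurable f) (C : ℝ) (hC : ∀ u, |f u| ≤ C) (G : ℂ → ℂ)
    (hGc : ContinuousOn G {s | 0 ≤ s.re})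
    (hG : ∀ s : ℂ, 0 < s.re → ∫ u in Set.Ioi (0:ℝ), (f u : ℂ) * Complex.exp (-s * u) = G s) :
    Tendsto (fun y => ∫ u in Set.Ioi (0:ℝ), f u * fejK (y - u)) atTop (𝓝 0) := by
  have RL := Real.tendsto_integral_exp_smul_cocompact
    (Set.indicator (Set.Ioc (-1:ℝ) 1) (fun t : ℝ => ((1 - |t| : ℝ) : ℂ) * G (t * Complex.I)))
  have hy : Tendsto (fun y : ℝ => -(y / (2 * Real.pi))) atTop (cocompact ℝ) :=
    (tendsto_neg_atTop_atBot.comp (tendsto_id.atTop_div_const (by positivity))).mono_right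
      atBot_le_cocompact
  have h := RL.comp hy
  have h2 : Tendsto (fun y => ((∫ u in Set.Ioi (0:ℝ), f u * fejK (y - u) : ℝ) : ℂ)) atTop (𝓝 0) := by
    refine h.congr fun y => ?_
    rw [conv_limit f hf C hC G hGc hG y, intervalIntegral.integral_of_le (by norm_num)]
    simp only [Function.comp]
    rw [← integral_indicator measurableSet_Ioc]
    congr 1
    ext t
    by_cases ht : t ∈ Set.Ioc (-1:ℝ) 1
    · simp only [Set.indicator_of_mem ht, Circle.smul_def, Real.fourierChar_apply, smul_eq_mul]
      have : (2 * Real.pi * -(t * -(y / (2 * Real.pi)))) = t * y := by field_simp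
      rw [this]
      push_cast
      ring
    · simp [Set.indicator_of_notMem ht]
  have h3 := (Complex.continuous_re.tendsto 0).comp h2
  simpa [Function.comp_def] using h3

end tauber

section tauber2
open MeasureTheory

lemma conv_scaled (F : ℝ → ℝ) (hF : Measurable F) (C : ℝ) (hF0 : ∀ u, 0 ≤ F u) (hC : ∀ u, F u ≤ C)
    (hneg : ∀ u ≤ 0, F u = 0) (G : ℂ → ℂ)
    (hGc : ContinuousOn G {s | 0 ≤ s.re})
    (hG : ∀ s : ℂ, 0 < s.re → ∫ u in Set.Ioi (0:ℝ), ((F u - 1 : ℝ) : ℂ) * Complex.exp (-s * u) = G s)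
    (b : ℝ) (hb : 0 < b) :
    Tendsto (fun y => ∫ v, F (b * (y - v)) * fejK v) atTop (𝓝 (∫ v, fejK v)) := by
  have hC0 : 0 ≤ C := (hF0 0).trans (hC 0)
  have A := conv_tendsto (fun u => F (b * u) - 1) (by fun_prop) (C + 1)
    (by
      intro u
      rw [abs_le]
      constructor <;> linarith [hF0 (b * u), hC (b * u)])
    (fun s => (b⁻¹ : ℂ) * G (s / b))
    (by
      apply ContinuousOn.mul continuousOn_const
      apply hGc.comp (by fun_prop)
      intro s hs
      simp only [Set.mem_ofPred_eq, Complex.div_ofReal_re] at hs ⊢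
      positivity)
    (by
      intro s hs
      have h1 : 0 < (s / b).re := by
        rw [Complex.div_ofReal_re]; positivity
      rw [← hG _ h1]
      have := integral_comp_mul_left_Ioi
        (fun u : ℝ => ((F u - 1 : ℝ) : ℂ) * Complex.exp (-(s / b) * u)) 0 hb
      rw [mul_zero, Complex.real_smul] at this
      rw [← Complex.ofReal_inv, ← this]
      congr 1
      ext u
      congr 2
      have : (b : ℂ) ≠ 0 := by exact_mod_cast hb.ne'
      push_cast
      field_simp)
  have B : Tendsto (fun y => ∫ v in Set.Iio y, fejK v) atTop (𝓝 (∫ v, fejK v)) :=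
    (aecover_Iio tendsto_id).integral_tendsto_of_countably_generated fejK_integrable
  have AB := A.add B
  rw [zero_add] at AB
  refine AB.congr fun y => ?_
  have hKi : Integrable (fun u => fejK (y - u)) := fejK_integrable.comp_sub_left y
  have hFm : Measurable fun u => F (b * u) := by fun_prop
  have hFK : Integrable (fun u => F (b * u) * fejK (y - u)) := by
    refine hKi.bdd_mul (c := C) hFm.aestronglyMeasurable ?_
    filter_upwards with u
    rw [Real.norm_of_nonneg (hF0 _)]
    exact hC _
  have e1 : ∫ v in Set.Iio y, fejK v = ∫ u in Set.Ioi (0:ℝ), fejK (y - u) := by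
    rw [← integral_indicator measurableSet_Iio, ← integral_indicator measurableSet_Ioi,
      ← integral_sub_left_eq_self _ volume y]
    congr 1
    ext u
    by_cases hu : 0 < u
    · rw [Set.indicator_of_mem (by simpa using hu), Set.indicator_of_mem (by simpa using hu)]
    · rw [Set.indicator_of_notMem (by simpa using hu), Set.indicator_of_notMem (by simpa using hu)]
  have e2 : ∫ v, F (b * (y - v)) * fejK v = ∫ u, F (b * u) * fejK (y - u) := by
    rw [← integral_sub_left_eq_self _ volume y]
    simp
  rw [e1, e2, ← integral_add, ← setIntegral_eq_integral_of_forall_compl_eq_zero (s := Set.Ioi 0)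
    (f := fun u => F (b * u) * fejK (y - u))]
  · congr 1
    ext u
    ring
  · intro u hu
    simp only [Set.mem_Ioi, not_lt] at hu
    rw [hneg _ (by nlinarith), zero_mul]
  · have : (fun u => (F (b * u) - 1) * fejK (y - u)) = fun u => F (b * u) * fejK (y - u) - fejK (y - u) := by
      ext u; ring
    rw [this]
    exact (hFK.sub hKi).integrableOn
  · exact hKi.integrableOn

lemma tauber_aux (F : ℝ → ℝ) (hF : Measurable F) (C : ℝ) (hF0 : ∀ u, 0 ≤ F u) (hC : ∀ u, F u ≤ C)
    (hmono : ∀ u v, u ≤ v → Real.exp u * F u ≤ Real.exp v * F v)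
    (hconv : ∀ b > 0, Tendsto (fun y => ∫ v, F (b * (y - v)) * fejK v) atTop (𝓝 (∫ v, fejK v)))
    (η : ℝ) (hη : 0 < η) (hη1 : η < 1) :
    ∀ᶠ x in atTop, F x ≤ (1 + η) * Real.exp η / (1 - η) ∧ Real.exp (-η) * (1 - η - C * η) ≤ F x := by
  have hC0 : 0 ≤ C := (hF0 0).trans (hC 0)
  set c := ∫ v, fejK v with hc
  have hcpos : 0 < c := fejK_integral_pos
  have B : Tendsto (fun δ : ℝ => ∫ v in Set.Icc (-δ) δ, fejK v) atTop (𝓝 c) :=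
    (aecover_Icc tendsto_neg_atTop_atBot tendsto_id).integral_tendsto_of_countably_generated fejK_integrable
  obtain ⟨δ, hδ0, hδ⟩ := ((eventually_gt_atTop (0:ℝ)).and
    (B.eventually (lt_mem_nhds (show (1 - η) * c < c by nlinarith)))).exists
  set m := ∫ v in Set.Icc (-δ) δ, fejK v with hm
  set b := η / (2 * δ) with hb
  have hbpos : 0 < b := by positivity
  have hb2 : 2 * δ * b = η := by rw [hb]; field_simp
  have hcv := hconv b hbpos
  have hlo := hcv.eventually (lt_mem_nhds (show (1 - η) * c < c by nlinarith))
  have hhi := hcv.eventually (gt_mem_nhds (show c < (1 + η) * c by nlinarith))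
  have hdecay : ∀ u v, u ≤ v → v - u ≤ η → F u ≤ Real.exp η * F v := by
    intro u v h1 h2
    have h3 := hmono u v h1
    have h4 : Real.exp v ≤ Real.exp u * Real.exp η := by
      rw [← Real.exp_add]; exact Real.exp_le_exp.mpr (by linarith)
    have h5 : Real.exp u * F u ≤ Real.exp u * (Real.exp η * F v) := by
      calc _ ≤ Real.exp v * F v := h3
        _ ≤ (Real.exp u * Real.exp η) * F v := by gcongr; exact hF0 v
        _ = _ := by ring
    exact le_of_mul_le_mul_left h5 (Real.exp_pos u)
  have hFK : ∀ y, Integrable (fun v => F (b * (y - v)) * fejK v) := by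
    intro y
    refine fejK_integrable.bdd_mul (c := C) (Measurable.aestronglyMeasurable (by fun_prop)) ?_
    filter_upwards with u
    rw [Real.norm_of_nonneg (hF0 _)]
    exact hC _
  have main : ∀ᶠ y in atTop, F (b * y) ≤ (1 + η) * Real.exp η / (1 - η) ∧
      Real.exp (-η) * (1 - η - C * η) ≤ F (b * y) := by
    have t1 : Tendsto (fun y : ℝ => y + δ) atTop atTop := tendsto_atTop_add_const_right _ _ tendsto_id
    have t2 : Tendsto (fun y : ℝ => y - δ) atTop atTop := tendsto_atTop_add_const_right _ _ tendsto_id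
    filter_upwards [t1.eventually hhi, t2.eventually hlo] with y hy1 hy2
    constructor
    · have h1 : (Real.exp (-η) * F (b * y)) * m ≤ ∫ v, F (b * (y + δ - v)) * fejK v := by
        rw [hm, ← integral_const_mul]
        calc _ ≤ ∫ v in Set.Icc (-δ) δ, F (b * (y + δ - v)) * fejK v := by
              apply setIntegral_mono_on (fejK_integrable.integrableOn.const_mul _) (hFK _).integrableOn measurableSet_Icc
              intro v hv
              apply mul_le_mul_of_nonneg_right _ (fejK_nonneg v)
              have := hdecay (b * y) (b * (y + δ - v)) (by nlinarith [hv.2]) (by nlinarith [hv.1])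
              calc _ ≤ Real.exp (-η) * (Real.exp η * F (b * (y + δ - v))) := by gcongr
                _ = _ := by rw [← mul_assoc, ← Real.exp_add]; simp
          _ ≤ _ := by
              apply setIntegral_le_integral (hFK _)
              filter_upwards with v using mul_nonneg (hF0 _) (fejK_nonneg v)
      have h2 : (Real.exp (-η) * F (b * y)) * ((1 - η) * c) ≤ (1 + η) * c := by
        have : 0 ≤ Real.exp (-η) * F (b * y) := mul_nonneg (Real.exp_pos _).le (hF0 _)
        calc _ ≤ (Real.exp (-η) * F (b * y)) * m := by gcongr
          _ ≤ _ := h1.trans hy1.le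
      have h3 : Real.exp (-η) * F (b * y) * (1 - η) ≤ 1 + η := by
        apply le_of_mul_le_mul_right _ hcpos
        linarith
      rw [le_div_iff₀ (by linarith)]
      calc F (b * y) * (1 - η) = (Real.exp (-η) * F (b * y) * (1 - η)) * Real.exp η := by
            have : Real.exp (-η) * Real.exp η = 1 := by rw [← Real.exp_add]; simp
            linear_combination (-(F (b*y) * (1 - η))) * this
        _ ≤ _ := by gcongr
    · have h1 : ∫ v, F (b * (y - δ - v)) * fejK v ≤ (Real.exp η * F (b * y)) * c + C * (c - m) := by
        have hcm : c - m = ∫ v in (Set.Icc (-δ) δ)ᶜ, fejK v := by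
          rw [hc, hm, ← integral_add_compl measurableSet_Icc fejK_integrable]; ring
        have hE : 0 ≤ Real.exp η * F (b * y) := mul_nonneg (Real.exp_pos _).le (hF0 _)
        rw [hcm, hc, ← integral_const_mul, ← integral_const_mul,
          ← integral_indicator measurableSet_Icc.compl, ← integral_add (fejK_integrable.const_mul _)
            ((fejK_integrable.const_mul _).indicator measurableSet_Icc.compl)]
        apply integral_mono (hFK _) ((fejK_integrable.const_mul _).add
            ((fejK_integrable.const_mul _).indicator measurableSet_Icc.compl))
        intro v
        simp only [Pi.add_apply]
        have hK := fejK_nonneg v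
        by_cases hv : v ∈ Set.Icc (-δ) δ
        · rw [Set.indicator_of_notMem (by simpa using hv), add_zero]
          apply mul_le_mul_of_nonneg_right _ hK
          exact hdecay _ _ (by nlinarith [hv.1]) (by nlinarith [hv.2])
        · rw [Set.indicator_of_mem (by simpa using hv)]
          have := mul_le_mul_of_nonneg_right (hC (b * (y - δ - v))) hK
          have := mul_nonneg hE hK
          linarith
      have h2 : (1 - η - C * η) * c ≤ (Real.exp η * F (b * y)) * c := by
        have : C * (c - m) ≤ C * (η * c) := by gcongr; linarith
        linarith
      have h3 := le_of_mul_le_mul_right h2 hcpos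
      calc _ ≤ Real.exp (-η) * (Real.exp η * F (b * y)) := by gcongr
        _ = _ := by rw [← mul_assoc, ← Real.exp_add]; simp
  have t : Tendsto (fun x : ℝ => x / b) atTop atTop := tendsto_id.atTop_div_const hbpos
  filter_upwards [t.eventually main] with x hx
  rwa [mul_div_cancel₀ _ hbpos.ne'] at hx

lemma tauber (F : ℝ → ℝ) (hF : Measurable F) (C : ℝ) (hF0 : ∀ u, 0 ≤ F u) (hC : ∀ u, F u ≤ C)
    (hmono : ∀ u v, u ≤ v → Real.exp u * F u ≤ Real.exp v * F v)
    (hneg : ∀ u ≤ 0, F u = 0) (G : ℂ → ℂ)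
    (hGc : ContinuousOn G {s | 0 ≤ s.re})
    (hG : ∀ s : ℂ, 0 < s.re → ∫ u in Set.Ioi (0:ℝ), ((F u - 1 : ℝ) : ℂ) * Complex.exp (-s * u) = G s) :
    Tendsto F atTop (𝓝 1) := by
  have aux := tauber_aux F hF C hF0 hC hmono (conv_scaled F hF C hF0 hC hneg G hGc hG)
  have hI : Set.Ioo (0:ℝ) 1 ∈ 𝓝[>] (0:ℝ) := Ioo_mem_nhdsGT one_pos
  rw [tendsto_order]
  constructor
  · intro a ha
    have h : Tendsto (fun η : ℝ => Real.exp (-η) * (1 - η - C * η)) (𝓝[>] 0) (𝓝 1) := by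
      have : Continuous (fun η : ℝ => Real.exp (-η) * (1 - η - C * η)) := by fun_prop
      have h := this.tendsto 0
      simp only [neg_zero, Real.exp_zero, mul_zero, sub_zero, mul_one] at h
      exact h.mono_left nhdsWithin_le_nhds
    obtain ⟨η, hη, h2⟩ := ((eventually_mem_set.mpr hI).and (h.eventually (lt_mem_nhds ha))).exists
    filter_upwards [aux η hη.1 hη.2] with x hx
    exact h2.trans_le hx.2
  · intro a ha
    have h : Tendsto (fun η : ℝ => (1 + η) * Real.exp η / (1 - η)) (𝓝[>] 0) (𝓝 1) := by
      have : ContinuousAt (fun η : ℝ => (1 + η) * Real.exp η / (1 - η)) 0 := by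
        apply ContinuousAt.div (by fun_prop) (by fun_prop) (by norm_num)
      have h := this.tendsto
      simp only [Real.exp_zero, sub_zero, add_zero, mul_one, div_one] at h
      exact h.mono_left nhdsWithin_le_nhds
    obtain ⟨η, hη, h2⟩ := ((eventually_mem_set.mpr hI).and (h.eventually (gt_mem_nhds ha))).exists
    filter_upwards [aux η hη.1 hη.2] with x hx
    exact hx.1.trans_lt h2

end tauber2

section psiasymp
open MeasureTheory ArithmeticFunction

noncomputable def FF (u : ℝ) : ℝ := Chebyshev.psi (Real.exp u) * Real.exp (-u)

noncomputable def GG (s : ℂ) : ℂ :=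
  (vonMangoldt.LFunctionResidueClassAux (q := 1) 1 (s + 1) - 1) / (s + 1)

lemma GG_cont : ContinuousOn GG {s | 0 ≤ s.re} := by
  unfold GG
  apply ContinuousOn.div
  · apply ContinuousOn.sub _ continuousOn_const
    apply (vonMangoldt.continuousOn_LFunctionResidueClassAux (q := 1) 1).comp (by fun_prop)
    intro s hs
    simpa using hs
  · fun_prop
  · intro s hs h
    have := congrArg Complex.re h
    simp only [Set.mem_ofPred_eq, Complex.add_re, Complex.one_re, Complex.zero_re] at hs this
    linarith

lemma residueClass_one : (fun n : ℕ => ((vonMangoldt.residueClass (1 : ZMod 1) n : ℝ) : ℂ)) = fun n => ((vonMangoldt n : ℝ) : ℂ) := by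
  ext n
  simp [vonMangoldt.residueClass, Set.indicator, Subsingleton.elim (n : ZMod 1) 1]

lemma psi_integral {z : ℂ} (hz : 1 < z.re) :
    LSeries (fun n => ((vonMangoldt n : ℝ) : ℂ)) z =
      z * ∫ t in Set.Ioi (1:ℝ), (Chebyshev.psi t : ℂ) * (t : ℂ) ^ (-(z + 1)) := by
  have := LSeries_eq_mul_integral_of_nonneg (fun n => vonMangoldt n) zero_le_one hz
    (by
      refine Asymptotics.IsBigO.of_bound (Real.log 4 + 4) ?_
      filter_upwards with n
      have h := Chebyshev.psi_le_const_mul_self (x := n) (by positivity)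
      have h0 := Chebyshev.psi_nonneg n
      have e : ∑ k ∈ Finset.Icc 1 n, vonMangoldt k = Chebyshev.psi n := by
        rw [Chebyshev.psi, Nat.floor_natCast]
        rfl
      rw [e, Real.norm_of_nonneg h0, Real.rpow_one, Real.norm_of_nonneg (by positivity)]
      exact h)
    (fun n => vonMangoldt_nonneg)
  rw [this]
  congr 2
  ext t
  congr 1
  rw [Chebyshev.psi]
  push_cast
  rfl

lemma FF_laplace (s : ℂ) (hs : 0 < s.re) :
    ∫ u in Set.Ioi (0:ℝ), ((FF u : ℝ) : ℂ) * Complex.exp (-s * u) =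
      LSeries (fun n => ((vonMangoldt n : ℝ) : ℂ)) (s + 1) / (s + 1) := by
  have hz : 1 < (s + 1).re := by simpa using hs
  have hz0 : s + 1 ≠ 0 := by
    intro h
    rw [h] at hz
    simp at hz
    linarith
  rw [psi_integral hz, mul_div_cancel_left₀ _ hz0]
  have himg : Real.exp '' Set.Ioi 0 = Set.Ioi 1 := by
    ext x
    simp only [Set.mem_image, Set.mem_Ioi]
    constructor
    · rintro ⟨u, hu, rfl⟩
      exact Real.one_lt_exp_iff.mpr hu
    · intro hx
      exact ⟨Real.log x, Real.log_pos hx, Real.exp_log (by linarith)⟩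
  rw [← himg, integral_image_eq_integral_abs_deriv_smul measurableSet_Ioi
    (fun x _ => (Real.hasDerivAt_exp x).hasDerivWithinAt) Real.exp_injective.injOn]
  congr 1
  ext u
  rw [abs_of_pos (Real.exp_pos u), Complex.real_smul, FF,
    Complex.cpow_def_of_ne_zero (by exact_mod_cast (Real.exp_pos u).ne'), ← Complex.ofReal_log (Real.exp_pos u).le,
    Real.log_exp]
  push_cast
  have h : Complex.exp (-(u:ℂ)) * Complex.exp (-s * u) = Complex.exp u * Complex.exp (u * -(s + 1 + 1)) := by
    rw [← Complex.exp_add, ← Complex.exp_add]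
    congr 1
    ring
  linear_combination ((Chebyshev.psi (Real.exp u)) : ℂ) * h

lemma FF_nonneg (u : ℝ) : 0 ≤ FF u := mul_nonneg (Chebyshev.psi_nonneg _) (Real.exp_pos _).le

lemma FF_le (u : ℝ) : FF u ≤ Real.log 4 + 4 := by
  have := Chebyshev.psi_le_const_mul_self (Real.exp_pos u).le
  unfold FF
  rw [Real.exp_neg, ← div_eq_mul_inv, div_le_iff₀ (Real.exp_pos u)]
  exact this

lemma FF_meas : Measurable FF := by
  unfold FF
  have : Measurable Chebyshev.psi := Chebyshev.psi_mono.measurable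
  fun_prop

lemma FF_tendsto : Tendsto FF atTop (𝓝 1) := by
  refine tauber FF FF_meas (Real.log 4 + 4) FF_nonneg FF_le ?_ ?_ GG GG_cont ?_
  · intro u v huv
    have h : ∀ u, Real.exp u * FF u = Chebyshev.psi (Real.exp u) := by
      intro u
      have : Real.exp u * Real.exp (-u) = 1 := by rw [← Real.exp_add]; simp
      unfold FF
      linear_combination (Chebyshev.psi (Real.exp u)) * this
    rw [h, h]
    exact Chebyshev.psi_mono (Real.exp_le_exp.mpr huv)
  · intro u hu
    rw [FF, Chebyshev.psi_eq_zero_of_le_one (Real.exp_le_one_iff.mpr hu), zero_mul]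
  · intro s hs
    have hi : IntegrableOn (fun u : ℝ => Complex.exp (-s * u)) (Set.Ioi 0) :=
      integrableOn_exp_mul_complex_Ioi (by simpa using hs) 0
    have hFi : IntegrableOn (fun u : ℝ => (FF u : ℂ) * Complex.exp (-s * u)) (Set.Ioi 0) := by
      refine hi.bdd_mul (c := Real.log 4 + 4) (Measurable.aestronglyMeasurable ?_) ?_
      · have := FF_meas
        fun_prop
      · filter_upwards with u
        rw [Complex.norm_real, Real.norm_of_nonneg (FF_nonneg u)]
        exact FF_le u
    have : ∀ u : ℝ, ((FF u - 1 : ℝ) : ℂ) * Complex.exp (-s * u) = (FF u : ℂ) * Complex.exp (-s * u) - Complex.exp (-s * u) := by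
      intro u; push_cast; ring
    simp_rw [this]
    rw [integral_sub hFi hi, FF_laplace s hs, integral_exp_mul_complex_Ioi (by simpa using hs)]
    have hz : 1 < (s + 1).re := by simpa using hs
    have e := vonMangoldt.eqOn_LFunctionResidueClassAux (q := 1) (a := 1) isUnit_one hz
    rw [residueClass_one] at e
    have hz0 : s + 1 ≠ 0 := by
      intro h
      rw [h] at hz
      simp at hz
      linarith
    have hs0 : s ≠ 0 := by
      rintro rfl
      simp at hs
    rw [GG, e]
    simp
    field_simp
    ring

lemma psi_tendsto : Tendsto (fun x => Chebyshev.psi x / x) atTop (𝓝 1) := by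
  refine (FF_tendsto.comp Real.tendsto_log_atTop).congr' ?_
  filter_upwards [eventually_gt_atTop 0] with x hx
  simp only [Function.comp, FF]
  rw [Real.exp_neg, Real.exp_log hx, div_eq_mul_inv]

lemma theta_tendsto : Tendsto (fun x => Chebyshev.theta x / x) atTop (𝓝 1) := by
  have h1 : Tendsto (fun x => (Chebyshev.psi - Chebyshev.theta) x / x) atTop (𝓝 0) := by
    apply Asymptotics.IsLittleO.tendsto_div_nhds_zero
    refine Chebyshev.isBigO_psi_sub_theta_sqrt.trans_isLittleO ?_
    refine Asymptotics.isLittleO_of_tendsto' ?_ ?_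
    · filter_upwards [eventually_gt_atTop 0] with x hx h
      exact absurd h hx.ne'
    · refine (Real.tendsto_sqrt_atTop.inv_tendsto_atTop).congr fun x => ?_
      simp [Real.sqrt_div_self]
  have := psi_tendsto.sub h1
  rw [sub_zero] at this
  refine this.congr fun x => ?_
  simp only [Pi.sub_apply]
  ring

lemma pi_tendsto : Tendsto (fun x : ℝ => (Nat.primeCounting ⌊x⌋₊ : ℝ) * Real.log x / x) atTop (𝓝 1) := by
  have h1 := Chebyshev.integral_theta_div_log_sq_isLittleO.tendsto_div_nhds_zero
  have := theta_tendsto.add h1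
  rw [add_zero] at this
  refine this.congr' ?_
  filter_upwards [eventually_ge_atTop 2] with x hx
  rw [Chebyshev.primeCounting_eq_theta_div_log_add_integral hx]
  have : 0 < Real.log x := Real.log_pos (by linarith)
  field_simp

end psiasymp

lemma primeCounting_p {n : ℕ} (hn : 1 ≤ n) : Nat.primeCounting (p n) = n := by
  obtain ⟨k, rfl⟩ := Nat.exists_eq_add_of_le' hn
  simp only [p, Nat.add_sub_cancel]
  rw [Nat.primeCounting_eq_primeCounting'_succ, Nat.primeCounting', Nat.count_succ,
    Nat.count_nth_of_infinite Nat.infinite_setOfPred_prime, if_pos (Nat.prime_nth_prime k)]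

lemma p_tendsto : Tendsto (fun n => (p n : ℝ)) atTop atTop := by
  refine tendsto_atTop_mono (f := fun n : ℕ => (n : ℝ)) (fun n => ?_) tendsto_natCast_atTop_atTop
  have := Nat.add_two_le_nth_prime (n - 1)
  have h : n ≤ p n := by unfold p; omega
  exact_mod_cast h

theorem nth_prime_refined_asymptotic :
    Tendsto (fun n : ℕ =>
        (p n : ℝ) / (n * (Real.log n + Real.log (Real.log n) - 1)))
      atTop (𝓝 1) := by
  have hlogn : Tendsto (fun n : ℕ => Real.log n) atTop atTop :=
    Real.tendsto_log_atTop.comp tendsto_natCast_atTop_atTop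
  have hlogP : Tendsto (fun n : ℕ => Real.log (p n)) atTop atTop :=
    Real.tendsto_log_atTop.comp p_tendsto
  have hll : Tendsto (fun x : ℝ => Real.log x / x) atTop (𝓝 0) :=
    Real.isLittleO_log_id_atTop.tendsto_div_nhds_zero
  have a : Tendsto (fun n : ℕ => (n : ℝ) * Real.log (p n) / p n) atTop (𝓝 1) := by
    refine (pi_tendsto.comp p_tendsto).congr' ?_
    filter_upwards [eventually_ge_atTop 1] with n hn
    simp only [Function.comp, Nat.floor_natCast]
    rw [primeCounting_p hn]
  have a1 : Tendsto (fun n : ℕ => Real.log n + Real.log (Real.log (p n)) - Real.log (p n)) atTop (𝓝 0) := by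
    have := a.log one_ne_zero
    rw [Real.log_one] at this
    refine this.congr' ?_
    filter_upwards [eventually_ge_atTop 1, hlogP.eventually_gt_atTop 0, p_tendsto.eventually_gt_atTop 0]
      with n hn h1 h2
    have hn' : (n : ℝ) ≠ 0 := by positivity
    rw [Real.log_div (mul_ne_zero hn' h1.ne') h2.ne', Real.log_mul hn' h1.ne']
  have a2 : Tendsto (fun n : ℕ => Real.log n / Real.log (p n)) atTop (𝓝 1) := by
    have h := ((a1.div_atTop hlogP).sub (hll.comp hlogP)).add (tendsto_const_nhds (x := (1:ℝ)))
    rw [sub_zero, zero_add] at h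
    refine h.congr' ?_
    filter_upwards [hlogP.eventually_gt_atTop 0] with n h1
    simp only [Function.comp]
    field_simp
    ring
  have a3 : Tendsto (fun n : ℕ => (Real.log n + Real.log (Real.log n) - 1) / Real.log n) atTop (𝓝 1) := by
    have h := ((hll.comp hlogn).sub ((tendsto_const_nhds (x := (1:ℝ))).div_atTop hlogn)).add
      (tendsto_const_nhds (x := (1:ℝ)))
    rw [sub_zero, zero_add] at h
    refine h.congr' ?_
    filter_upwards [hlogn.eventually_gt_atTop 0] with n h1
    simp only [Function.comp]
    field_simp
    ring
  have h := ((a.mul a2).mul a3).inv₀ (by norm_num)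
  rw [mul_one, mul_one, inv_one] at h
  refine h.congr' ?_
  filter_upwards [eventually_ge_atTop 1, hlogP.eventually_gt_atTop 0, p_tendsto.eventually_gt_atTop 0,
    hlogn.eventually_gt_atTop 0] with n hn h1 h2 h3
  have hn' : (n : ℝ) ≠ 0 := by positivity
  rw [← inv_div]
  congr 1
  field_simp
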